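/- arXiv:2601.21730 — 8 statements merged into one kernel-verified Lean document; each statement's English description precedes it below -/
import Mathlib

section
/- Let G be a BiHom-algebra over a field K. Then the Sweedler dual G° is a K-subspace of the full linear dual G*: the zero functional belongs to G°, and G° is closed under addition and under scalar multiplication. -/
open TensorProduct

/-- An ideal of a BiHom-algebra `(G, mul, α, β)`. -/
def IsBiHomIdeal {K G : Type*} [Field K] [AddCommGroup G] [Module K G]
    (mul : G →ₗ[K] G →ₗ[K] G) (α β : G →ₗ[K] G) (H : Submodule K G) : Prop :=
  (∀ x : G, ∀ h ∈ H, mul x h ∈ H) ∧ (∀ x : G, ∀ h ∈ H, mul h x ∈ H) ∧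
    (∀ h ∈ H, α h ∈ H) ∧ (∀ h ∈ H, β h ∈ H)

/-- Membership in the Sweedler (finite) dual `G°`: a linear functional vanishing
on some finite-codimensional BiHom-ideal of `G`. -/
def InSweedlerDual {K G : Type*} [Field K] [AddCommGroup G] [Module K G]
    (mul : G →ₗ[K] G →ₗ[K] G) (α β : G →ₗ[K] G) (f : Module.Dual K G) : Prop :=
  ∃ J : Submodule K G, IsBiHomIdeal mul α β J ∧ FiniteDimensional K (G ⧸ J) ∧
    ∀ x ∈ J, f x = 0

/-- The Sweedler dual `G°` of a BiHom-algebra is a `K`-subspace of `G*`: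
it contains the zero functional and is closed under addition and scalar
multiplication. -/
theorem sweedlerDual_isSubspace {K G : Type*} [Field K] [AddCommGroup G] [Module K G]
    (mul : G →ₗ[K] G →ₗ[K] G) (α β : G →ₗ[K] G)
    (hcomm : ∀ x, α (β x) = β (α x))
    (hassoc : ∀ x y z, mul (α x) (mul y z) = mul (mul x y) (β z))
    (hαmul : ∀ x y, α (mul x y) = mul (α x) (α y))
    (hβmul : ∀ x y, β (mul x y) = mul (β x) (β y)) :
    InSweedlerDual mul α β (0 : Module.Dual K G) ∧
    (∀ f g : Module.Dual K G, InSweedlerDual mul α β f → InSweedlerDual mul α β g →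
      InSweedlerDual mul α β (f + g)) ∧
    (∀ (c : K) (f : Module.Dual K G), InSweedlerDual mul α β f →
      InSweedlerDual mul α β (c • f)) := by
  refine ⟨?_, ?_, ?_⟩
  · exact ⟨⊤, by simp [IsBiHomIdeal], inferInstance, by simp⟩
  -- `f + g` vanishes on the intersection of the two ideals, whose quotient embeds
  -- into the product of the two finite-dimensional quotients.
  · rintro f g ⟨I, ⟨hIl, hIr, hIα, hIβ⟩, hIfin, hf⟩ ⟨J, ⟨hJl, hJr, hJα, hJβ⟩, hJfin, hg⟩
    refine ⟨I ⊓ J, ⟨?_, ?_, ?_, ?_⟩, Submodule.CoFG.inf hIfin hJfin, ?_⟩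
    · exact fun x h hh => ⟨hIl x h hh.1, hJl x h hh.2⟩
    · exact fun x h hh => ⟨hIr x h hh.1, hJr x h hh.2⟩
    · exact fun h hh => ⟨hIα h hh.1, hJα h hh.2⟩
    · exact fun h hh => ⟨hIβ h hh.1, hJβ h hh.2⟩
    · intro x hx
      simp [hf x hx.1, hg x hx.2]
  · rintro c f ⟨J, hJ, hJfin, hf⟩
    exact ⟨J, hJ, hJfin, fun x hx => by simp [hf x hx]⟩
end

section
/- Let f : G → G' be a morphism of BiHom-algebras over a field K. If h ∈ G'° (i.e. h is a linear functional on G' vanishing on some finite-codimensional ideal of G'), then the composite h∘f lies in the Sweedler dual G° of G; that is, the transpose f* maps G'° into G°. -/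
/-!
If `h` vanishes on a finite-codimensional ideal `J` of the target, then `h ∘ f` vanishes on the
preimage `J.comap f`. This is an ideal because `f` is a morphism, and it has finite codimension
because `f` induces an injection of the quotient by `J.comap f` into the quotient by `J`.
-/

open TensorProduct

/-- The transpose of a morphism of BiHom-algebras maps the Sweedler dual of the
target into the Sweedler dual of the source. -/
theorem dualMap_mapsTo_sweedlerDual {K G G' : Type*} [Field K]
    [AddCommGroup G] [Module K G] [AddCommGroup G'] [Module K G']
    (mul : G →ₗ[K] G →ₗ[K] G) (α β : G →ₗ[K] G)
    (mul' : G' →ₗ[K] G' →ₗ[K] G') (α' β' : G' →ₗ[K] G')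
    (hcomm : ∀ x, α (β x) = β (α x))
    (hassoc : ∀ x y z, mul (α x) (mul y z) = mul (mul x y) (β z))
    (hαmul : ∀ x y, α (mul x y) = mul (α x) (α y))
    (hβmul : ∀ x y, β (mul x y) = mul (β x) (β y))
    (hcomm' : ∀ x, α' (β' x) = β' (α' x))
    (hassoc' : ∀ x y z, mul' (α' x) (mul' y z) = mul' (mul' x y) (β' z))
    (hαmul' : ∀ x y, α' (mul' x y) = mul' (α' x) (α' y))
    (hβmul' : ∀ x y, β' (mul' x y) = mul' (β' x) (β' y))
    (f : G →ₗ[K] G')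
    (hfmul : ∀ x y, f (mul x y) = mul' (f x) (f y))
    (hfα : ∀ x, f (α x) = α' (f x))
    (hfβ : ∀ x, f (β x) = β' (f x))
    (h : Module.Dual K G') (hh : InSweedlerDual mul' α' β' h) :
    InSweedlerDual mul α β (h.comp f) := by
  obtain ⟨J, ⟨hl, hr, hα, hβ⟩, hfin, hJ⟩ := hh
  refine ⟨J.comap f, ⟨fun x y hy => ?_, fun x y hy => ?_, fun y hy => ?_, fun y hy => ?_⟩,
    ?_, fun x hx => hJ _ hx⟩
  · simpa only [Submodule.mem_comap, hfmul] using hl (f x) _ hy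
  · simpa only [Submodule.mem_comap, hfmul] using hr (f x) _ hy
  · simpa only [Submodule.mem_comap, hfα] using hα _ hy
  · simpa only [Submodule.mem_comap, hfβ] using hβ _ hy
  · refine FiniteDimensional.of_injective ((J.comap f).mapQ J f le_rfl) ?_
    rw [← LinearMap.ker_eq_bot]
    exact Submodule.ker_liftQ_eq_bot _ _ _ (by rw [LinearMap.ker_comp, Submodule.ker_mkQ])
end

section
/- Let G be a BiHom-algebra over a field K and let f ∈ G°, say f vanishes on the finite-codimensional ideal J of G. Then there exist a natural number n and linear functionals g₁,…,gₙ, h₁,…,hₙ ∈ G°, each vanishing on J, such that f(xy) = Σᵢ₌₁ⁿ gᵢ(x)hᵢ(y) for all x, y ∈ G. In other words, the pullback of f along the multiplication lies in the image of G°⊗G° inside (G⊗G)*. -/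
/-!
Since `J` is a right ideal on which `f` vanishes, `f (x * y)` depends on `x` only modulo `J`.
Expanding the class of `x` in a finite basis of `G ⧸ J` writes `f (x * y)` as a finite sum of
coordinates of `x` times the functionals `y ↦ f (e i * y)`, with `e i` lifting the basis.
The coordinates vanish on `J` by construction, the other functionals because `J` is a left ideal.
-/

open TensorProduct

/-- For `f ∈ G°` vanishing on a finite-codimensional BiHom-ideal `J`, the pullback
of `f` along the multiplication decomposes as a finite sum `Σ gᵢ ⊗ hᵢ` with all
`gᵢ, hᵢ ∈ G°` vanishing on `J`. -/
theorem sweedlerDual_comul_decomposition {K G : Type*} [Field K]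
    [AddCommGroup G] [Module K G]
    (mul : G →ₗ[K] G →ₗ[K] G) (α β : G →ₗ[K] G)
    (hcomm : ∀ x, α (β x) = β (α x))
    (hassoc : ∀ x y z, mul (α x) (mul y z) = mul (mul x y) (β z))
    (hαmul : ∀ x y, α (mul x y) = mul (α x) (α y))
    (hβmul : ∀ x y, β (mul x y) = mul (β x) (β y))
    (f : Module.Dual K G) (J : Submodule K G)
    (hJ : IsBiHomIdeal mul α β J) (hJfc : FiniteDimensional K (G ⧸ J))
    (hfJ : ∀ x ∈ J, f x = 0) :
    ∃ (n : ℕ) (g h : Fin n → Module.Dual K G),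
      (∀ i, (∀ x ∈ J, g i x = 0) ∧ InSweedlerDual mul α β (g i)) ∧
      (∀ i, (∀ x ∈ J, h i x = 0) ∧ InSweedlerDual mul α β (h i)) ∧
      ∀ x y : G, f (mul x y) = ∑ i, g i x * h i y := by
  -- The `g i` are the coordinates modulo `J`, and `h i = f (e i * ·)` for lifts `e i` of the basis.
  let b := Module.finBasis K (G ⧸ J)
  choose e he using fun i => J.mkQ_surjective (b i)
  have inDual : ∀ φ : Module.Dual K G, (∀ x ∈ J, φ x = 0) →
      (∀ x ∈ J, φ x = 0) ∧ InSweedlerDual mul α β φ :=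
    fun φ hφ => ⟨hφ, J, hJ, hJfc, hφ⟩
  refine ⟨_, fun i => b.coord i ∘ₗ J.mkQ, fun i => f ∘ₗ mul (e i),
    fun i => inDual _ fun x hx => ?_,
    fun i => inDual _ fun x hx => hfJ _ (hJ.1 _ _ hx), fun x y => ?_⟩
  · have hx0 : J.mkQ x = 0 := (Submodule.Quotient.mk_eq_zero J).2 hx
    rw [LinearMap.comp_apply, hx0, map_zero]
  · have hmem : x - ∑ i, b.coord i (J.mkQ x) • e i ∈ J := by
      refine (Submodule.Quotient.mk_eq_zero J).1 ?_
      rw [← J.mkQ_apply, map_sub, map_sum]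
      simp only [map_smul, he, Module.Basis.coord_apply, b.sum_repr, sub_self]
    have h0 := hfJ _ (hJ.2.1 y _ hmem)
    simpa only [map_sub, map_sum, map_smul, LinearMap.sub_apply, LinearMap.sum_apply,
      LinearMap.smul_apply, smul_eq_mul, sub_eq_zero, LinearMap.comp_apply] using h0
end

section
/- Let (G, μ, α, β) be a finite-dimensional BiHom-algebra over a field K. Let Δ : G* → G* ⊗ G* be the composite of the transpose μ* : G* → (G ⊗ G)* of the multiplication with the inverse of the canonical isomorphism G* ⊗ G* ≅ (G ⊗ G)*. Then (G*, Δ, β*, α*) is a BiHom-coalgebra, where α*(f) = f∘α and β*(f) = f∘β: one has α*∘β* = β*∘α*, the BiHom-coassociativity (α* ⊗ Δ)∘Δ = (Δ ⊗ β*)∘Δ, and the comultiplicativity identities Δ∘β* = (β* ⊗ β*)∘Δ and Δ∘α* = (α* ⊗ α*)∘Δ. -/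
/-!
In finite dimension the canonical map `dualDistrib : G* ⊗ G* → (G ⊗ G)*` is injective, and hence
so is its three-fold version `dualDistrib₃ : G* ⊗ (G* ⊗ G*) → (G ⊗ (G ⊗ G))*`. Each identity
between tensors over `G*` may therefore be checked by evaluating both sides on pure tensors of
`G`. Under evaluation `Δ f` becomes `x ⊗ y ↦ f (xy)`, so the two comultiplicativity identities
become the multiplicativity of `α` and `β`. The two sides of coassociativity become
`f (α(x)(yz))` and `f ((xy)β(z))` (`dualDistrib₃_map_right` and `dualDistrib₃_assoc_map_left`),
which agree by BiHom-associativity.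
-/

open TensorProduct

namespace BiHomDual

open Module

variable {K G : Type*} [Field K] [AddCommGroup G] [Module K G]

theorem dualDistrib_injective (M N : Type*) [AddCommGroup M] [Module K M] [FiniteDimensional K M]
    [AddCommGroup N] [Module K N] [FiniteDimensional K N] :
    Function.Injective (dualDistrib K M N) :=
  (dualDistribEquiv K M N).injective

/-- The canonical map `G* ⊗ (G* ⊗ G*) → (G ⊗ (G ⊗ G))*`, sending `f ⊗ (g ⊗ h)` to
`x ⊗ (y ⊗ z) ↦ f x * (g y * h z)`. -/
noncomputable def dualDistrib₃ (K G : Type*) [Field K] [AddCommGroup G] [Module K G] :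
    Dual K G ⊗[K] (Dual K G ⊗[K] Dual K G) →ₗ[K] Dual K (G ⊗[K] (G ⊗[K] G)) :=
  dualDistrib K G (G ⊗[K] G) ∘ₗ (dualDistrib K G G).lTensor (Dual K G)

theorem dualDistrib₃_injective [FiniteDimensional K G] :
    Function.Injective (dualDistrib₃ K G) :=
  (dualDistrib_injective G (G ⊗[K] G)).comp
    (Module.Flat.lTensor_preserves_injective_linearMap _ (dualDistrib_injective G G))

theorem dualDistrib_map_dualMap (a b : G →ₗ[K] G) (t : Dual K G ⊗[K] Dual K G) (x y : G) :
    dualDistrib K G G (map a.dualMap b.dualMap t) (x ⊗ₜ y) =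
      dualDistrib K G G t (a x ⊗ₜ b y) := by
  induction t with
  | zero => simp
  | tmul f g => simp
  | add s t hs ht => simp only [map_add, LinearMap.add_apply, hs, ht]

theorem dualDistrib₃_assoc_tmul (s : Dual K G ⊗[K] Dual K G) (h : Dual K G) (x y z : G) :
    dualDistrib₃ K G (TensorProduct.assoc K _ _ _ (s ⊗ₜ h)) (x ⊗ₜ (y ⊗ₜ z)) =
      dualDistrib K G G s (x ⊗ₜ y) * h z := by
  induction s with
  | zero => simp
  | tmul f g => simp [dualDistrib₃, mul_assoc]
  | add s t hs ht => simp only [add_tmul, map_add, LinearMap.add_apply, hs, ht, add_mul]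

section Comul

variable {mul : G →ₗ[K] G →ₗ[K] G} {Δ : Dual K G →ₗ[K] Dual K G ⊗[K] Dual K G}

theorem dualDistrib_comul
    (hΔ : ∀ f : Dual K G, dualDistrib K G G (Δ f) = (lift mul).dualMap f)
    (f : Dual K G) (x y : G) :
    dualDistrib K G G (Δ f) (x ⊗ₜ y) = f (mul x y) := by
  simp [hΔ]

theorem dualDistrib₃_map_right
    (hΔ : ∀ f : Dual K G, dualDistrib K G G (Δ f) = (lift mul).dualMap f)
    (a : G →ₗ[K] G) (t : Dual K G ⊗[K] Dual K G) (x y z : G) :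
    dualDistrib₃ K G (map a.dualMap Δ t) (x ⊗ₜ (y ⊗ₜ z)) =
      dualDistrib K G G t (a x ⊗ₜ mul y z) := by
  induction t with
  | zero => simp
  | tmul f g => simp [dualDistrib₃, hΔ]
  | add s t hs ht => simp only [map_add, LinearMap.add_apply, hs, ht]

theorem dualDistrib₃_assoc_map_left
    (hΔ : ∀ f : Dual K G, dualDistrib K G G (Δ f) = (lift mul).dualMap f)
    (b : G →ₗ[K] G) (t : Dual K G ⊗[K] Dual K G) (x y z : G) :
    dualDistrib₃ K G (TensorProduct.assoc K _ _ _ (map Δ b.dualMap t)) (x ⊗ₜ (y ⊗ₜ z)) =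
      dualDistrib K G G t (mul x y ⊗ₜ b z) := by
  induction t with
  | zero => simp
  | tmul f g => simp [dualDistrib₃_assoc_tmul, hΔ]
  | add s t hs ht => simp only [map_add, LinearMap.add_apply, hs, ht]

/-- `Δ` commutes with the transpose of any multiplicative linear map. -/
theorem comul_dualMap [FiniteDimensional K G]
    (hΔ : ∀ f : Dual K G, dualDistrib K G G (Δ f) = (lift mul).dualMap f)
    (a : G →ₗ[K] G)
    (ha : ∀ x y, a (mul x y) = mul (a x) (a y)) (f : Dual K G) :
    Δ (a.dualMap f) = map a.dualMap a.dualMap (Δ f) := by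
  refine dualDistrib_injective G G (TensorProduct.ext' fun x y => ?_)
  rw [dualDistrib_map_dualMap, dualDistrib_comul hΔ, dualDistrib_comul hΔ,
    LinearMap.dualMap_apply, ha]

end Comul

end BiHomDual

/-- The dual of a finite-dimensional BiHom-algebra `(G, μ, α, β)` is a
BiHom-coalgebra `(G*, Δ, β*, α*)`, where `Δ` is the transpose of the
multiplication composed with the inverse of the canonical isomorphism
`G* ⊗ G* ≅ (G ⊗ G)*` (here `Δ` is characterized by
`dualDistrib ∘ Δ = μ*`). -/
theorem dual_biHomCoalgebra_of_finiteDimensional {K G : Type*} [Field K]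
    [AddCommGroup G] [Module K G] [FiniteDimensional K G]
    (mul : G →ₗ[K] G →ₗ[K] G) (α β : G →ₗ[K] G)
    (hcomm : ∀ x, α (β x) = β (α x))
    (hassoc : ∀ x y z, mul (α x) (mul y z) = mul (mul x y) (β z))
    (hαmul : ∀ x y, α (mul x y) = mul (α x) (α y))
    (hβmul : ∀ x y, β (mul x y) = mul (β x) (β y))
    (Δ : Module.Dual K G →ₗ[K] Module.Dual K G ⊗[K] Module.Dual K G)
    (hΔ : ∀ f : Module.Dual K G,
      TensorProduct.dualDistrib K G G (Δ f) = (TensorProduct.lift mul).dualMap f) :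
    (∀ f : Module.Dual K G, α.dualMap (β.dualMap f) = β.dualMap (α.dualMap f)) ∧
    (∀ f : Module.Dual K G,
      TensorProduct.map α.dualMap Δ (Δ f) =
        TensorProduct.assoc K (Module.Dual K G) (Module.Dual K G) (Module.Dual K G)
          (TensorProduct.map Δ β.dualMap (Δ f))) ∧
    (∀ f : Module.Dual K G,
      Δ (β.dualMap f) = TensorProduct.map β.dualMap β.dualMap (Δ f)) ∧
    (∀ f : Module.Dual K G,
      Δ (α.dualMap f) = TensorProduct.map α.dualMap α.dualMap (Δ f)) := by
  refine ⟨fun f => LinearMap.ext fun x => ?_, fun f => ?_,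
    BiHomDual.comul_dualMap hΔ β hβmul, BiHomDual.comul_dualMap hΔ α hαmul⟩
  · simp [hcomm]
  · refine BiHomDual.dualDistrib₃_injective (TensorProduct.ext_threefold' fun x y z => ?_)
    rw [BiHomDual.dualDistrib₃_map_right hΔ, BiHomDual.dualDistrib₃_assoc_map_left hΔ,
      BiHomDual.dualDistrib_comul hΔ, BiHomDual.dualDistrib_comul hΔ, hassoc]
end

section
/- Let G be a BiHom-algebra over a field K with β : G → G surjective, let (M, ρ, κ, τ) be a right BiHom-module over G, and let f ∈ M°, say f vanishes on M·J for a finite-codimensional ideal J of G. Then there exist a natural number n, functionals ξ₁,…,ξₙ ∈ M° (each vanishing on M·J) and g₁,…,gₙ ∈ G° (each vanishing on J) such that f(m·a) = Σᵢ₌₁ⁿ ξᵢ(m)gᵢ(a) for all m ∈ M and a ∈ G. -/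
/-!
Choose lifts `eᵢ ∈ G` of a basis of the finite-dimensional space `G ⧸ J`, and let `gᵢ` be the
`i`-th coordinate of the class modulo `J` and `ξᵢ(m) = f(m·eᵢ)`. Since `a - ∑ gᵢ(a) eᵢ ∈ J` and `f`
kills `M·J`, the required formula holds. Each `ξᵢ` kills `M·J`: writing `eᵢ = β(h)`,
`(m·j)·β(h) = κ(m)·(jh)` lies in `M·J` because `J` is an ideal.
-/

open TensorProduct

/-- `M·J`: the `K`-span of `{m·j : m ∈ M, j ∈ J}` inside a right BiHom-module. -/
def moduleIdealSpan {K G M : Type*} [Field K] [AddCommGroup G] [Module K G]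
    [AddCommGroup M] [Module K M]
    (act : M →ₗ[K] G →ₗ[K] M) (J : Submodule K G) : Submodule K M :=
  Submodule.span K {x : M | ∃ m : M, ∃ j ∈ J, x = act m j}

/-- Membership in the Sweedler dual `M°` of a right BiHom-module. -/
def InModuleSweedlerDual {K G M : Type*} [Field K] [AddCommGroup G] [Module K G]
    [AddCommGroup M] [Module K M]
    (mul : G →ₗ[K] G →ₗ[K] G) (α β : G →ₗ[K] G)
    (act : M →ₗ[K] G →ₗ[K] M) (f : Module.Dual K M) : Prop :=
  ∃ J : Submodule K G, IsBiHomIdeal mul α β J ∧ FiniteDimensional K (G ⧸ J) ∧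
    ∀ x ∈ moduleIdealSpan act J, f x = 0

/-- For `β` surjective and `f ∈ M°` vanishing on `M·J` (with `J` a
finite-codimensional BiHom-ideal), the pullback of `f` along the action
decomposes as a finite sum `Σ ξᵢ ⊗ gᵢ` with `ξᵢ ∈ M°` vanishing on `M·J`
and `gᵢ ∈ G°` vanishing on `J`. -/
theorem moduleSweedlerDual_coaction_decomposition {K G M : Type*} [Field K]
    [AddCommGroup G] [Module K G] [AddCommGroup M] [Module K M]
    (mul : G →ₗ[K] G →ₗ[K] G) (α β : G →ₗ[K] G)
    (hcomm : ∀ x, α (β x) = β (α x))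
    (hassoc : ∀ x y z, mul (α x) (mul y z) = mul (mul x y) (β z))
    (hαmul : ∀ x y, α (mul x y) = mul (α x) (α y))
    (hβmul : ∀ x y, β (mul x y) = mul (β x) (β y))
    (hβsurj : Function.Surjective β)
    (act : M →ₗ[K] G →ₗ[K] M) (κ τ : M →ₗ[K] M)
    (hκτ : ∀ m, κ (τ m) = τ (κ m))
    (hact : ∀ (m : M) (g h : G), act (act m g) (β h) = act (κ m) (mul g h))
    (hκact : ∀ (m : M) (g : G), act (κ m) (α g) = κ (act m g))
    (hτact : ∀ (m : M) (g : G), act (τ m) (β g) = τ (act m g))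
    (f : Module.Dual K M) (J : Submodule K G)
    (hJ : IsBiHomIdeal mul α β J) (hJfc : FiniteDimensional K (G ⧸ J))
    (hfJ : ∀ x ∈ moduleIdealSpan act J, f x = 0) :
    ∃ (n : ℕ) (ξ : Fin n → Module.Dual K M) (g : Fin n → Module.Dual K G),
      (∀ i, (∀ x ∈ moduleIdealSpan act J, ξ i x = 0) ∧
        InModuleSweedlerDual mul α β act (ξ i)) ∧
      (∀ i, (∀ x ∈ J, g i x = 0) ∧ InSweedlerDual mul α β (g i)) ∧
      ∀ (m : M) (a : G), f (act m a) = ∑ i, ξ i m * g i a := by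
  classical
  let b := Module.finBasis K (G ⧸ J)
  choose e he using fun i => J.mkQ_surjective (b i)
  let ξ : Fin (Module.finrank K (G ⧸ J)) → Module.Dual K M := fun i => f ∘ₗ act.flip (e i)
  let g : Fin (Module.finrank K (G ⧸ J)) → Module.Dual K G := fun i => b.coord i ∘ₗ J.mkQ
  have hf : ∀ (m : M), ∀ j ∈ J, f (act m j) = 0 := fun m j hj =>
    hfJ _ (Submodule.subset_span ⟨m, j, hj, rfl⟩)
  have hξ : ∀ i, ∀ x ∈ moduleIdealSpan act J, ξ i x = 0 := by
    intro i x hx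
    have hle : moduleIdealSpan act J ≤ LinearMap.ker (ξ i) := by
      refine Submodule.span_le.2 ?_
      rintro _ ⟨m, j, hj, rfl⟩
      -- Surjectivity of `β` is what makes BiHom-associativity applicable to `(m·j)·eᵢ`.
      obtain ⟨h, hh⟩ := hβsurj (e i)
      change f (act (act m j) (e i)) = 0
      rw [← hh, hact]
      exact hf _ _ (hJ.2.1 h j hj)
    exact hle hx
  have hg : ∀ i, ∀ x ∈ J, g i x = 0 := by
    intro i x hx
    have hx0 : J.mkQ x = 0 := (Submodule.Quotient.mk_eq_zero J).2 hx
    simp only [g, LinearMap.comp_apply, hx0, map_zero]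
  refine ⟨_, ξ, g, fun i => ⟨hξ i, J, hJ, hJfc, hξ i⟩, fun i => ⟨hg i, J, hJ, hJfc, hg i⟩, ?_⟩
  intro m a
  have hmem : a - ∑ i, g i a • e i ∈ J := by
    rw [← Submodule.Quotient.mk_eq_zero, ← Submodule.mkQ_apply, map_sub, map_sum, sub_eq_zero]
    simp only [map_smul, he]
    exact (b.sum_repr (J.mkQ a)).symm
  have h0 := hf m _ hmem
  rw [map_sub, map_sub, sub_eq_zero] at h0
  rw [h0]
  simp only [map_sum, map_smul, smul_eq_mul]
  exact Finset.sum_congr rfl fun i _ => mul_comm _ _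
end

section
/- Let G be a BiHom-algebra over a field K and let (M, ρ, κ, τ) be a right BiHom-module over G. If f ∈ M°, then f∘κ ∈ M° and f∘τ ∈ M°; that is, the Sweedler dual M° is stable under the transposes κ* and τ*. -/
open TensorProduct

/-- The Sweedler dual `M°` of a right BiHom-module is stable under the
transposes `κ*` and `τ*`: if `f ∈ M°` then `f ∘ κ ∈ M°` and `f ∘ τ ∈ M°`. -/
theorem moduleSweedlerDual_stable_under_twists {K G M : Type*} [Field K]
    [AddCommGroup G] [Module K G] [AddCommGroup M] [Module K M]
    (mul : G →ₗ[K] G →ₗ[K] G) (α β : G →ₗ[K] G)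
    (hcomm : ∀ x, α (β x) = β (α x))
    (hassoc : ∀ x y z, mul (α x) (mul y z) = mul (mul x y) (β z))
    (hαmul : ∀ x y, α (mul x y) = mul (α x) (α y))
    (hβmul : ∀ x y, β (mul x y) = mul (β x) (β y))
    (act : M →ₗ[K] G →ₗ[K] M) (κ τ : M →ₗ[K] M)
    (hκτ : ∀ m, κ (τ m) = τ (κ m))
    (hact : ∀ (m : M) (g h : G), act (act m g) (β h) = act (κ m) (mul g h))
    (hκact : ∀ (m : M) (g : G), act (κ m) (α g) = κ (act m g))
    (hτact : ∀ (m : M) (g : G), act (τ m) (β g) = τ (act m g))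
    (f : Module.Dual K M) (hf : InModuleSweedlerDual mul α β act f) :
    InModuleSweedlerDual mul α β act (f.comp κ) ∧
    InModuleSweedlerDual mul α β act (f.comp τ) := by
  obtain ⟨J, hJ, hfin, hfJ⟩ := hf
  have hgen : ∀ (m : M), ∀ j ∈ J, f (act m j) = 0 := fun m j hj =>
    hfJ _ (Submodule.subset_span ⟨m, j, hj, rfl⟩)
  -- The same ideal `J` works for both twists: `κ (m·j) = κ m · α j` and
  -- `τ (m·j) = τ m · β j` lie in `M·J` because `α` and `β` preserve `J`.
  refine ⟨⟨J, hJ, hfin, fun x hx => ?_⟩, ⟨J, hJ, hfin, fun x hx => ?_⟩⟩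
  · refine (Submodule.span_le (p := LinearMap.ker (f.comp κ))).2 ?_ hx
    rintro _ ⟨m, j, hj, rfl⟩
    change f (κ (act m j)) = 0
    rw [← hκact]
    exact hgen _ _ (hJ.2.2.1 j hj)
  · refine (Submodule.span_le (p := LinearMap.ker (f.comp τ))).2 ?_ hx
    rintro _ ⟨m, j, hj, rfl⟩
    change f (τ (act m j)) = 0
    rw [← hτact]
    exact hgen _ _ (hJ.2.2.2 j hj)
end

section
/- Let G be a BiHom-algebra over a field K, let (M, ρ, κ, τ) and (N, ρ', κ', τ') be right BiHom-modules over G, and let σ : M → N be a morphism of right BiHom-modules. If f ∈ N°, then f∘σ ∈ M°; that is, the transpose σ* maps the Sweedler dual N° into M°. -/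
open TensorProduct

/-- The transpose of a morphism of right BiHom-modules `σ : M → N` maps the
Sweedler dual `N°` into `M°`. -/
theorem moduleSweedlerDual_dualMap {K G M N : Type*} [Field K]
    [AddCommGroup G] [Module K G] [AddCommGroup M] [Module K M]
    [AddCommGroup N] [Module K N]
    (mul : G →ₗ[K] G →ₗ[K] G) (α β : G →ₗ[K] G)
    (hcomm : ∀ x, α (β x) = β (α x))
    (hassoc : ∀ x y z, mul (α x) (mul y z) = mul (mul x y) (β z))
    (hαmul : ∀ x y, α (mul x y) = mul (α x) (α y))
    (hβmul : ∀ x y, β (mul x y) = mul (β x) (β y))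
    (act : M →ₗ[K] G →ₗ[K] M) (κ τ : M →ₗ[K] M)
    (hκτ : ∀ m, κ (τ m) = τ (κ m))
    (hact : ∀ (m : M) (g h : G), act (act m g) (β h) = act (κ m) (mul g h))
    (hκact : ∀ (m : M) (g : G), act (κ m) (α g) = κ (act m g))
    (hτact : ∀ (m : M) (g : G), act (τ m) (β g) = τ (act m g))
    (act' : N →ₗ[K] G →ₗ[K] N) (κ' τ' : N →ₗ[K] N)
    (hκτ' : ∀ n, κ' (τ' n) = τ' (κ' n))
    (hact' : ∀ (n : N) (g h : G), act' (act' n g) (β h) = act' (κ' n) (mul g h))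
    (hκact' : ∀ (n : N) (g : G), act' (κ' n) (α g) = κ' (act' n g))
    (hτact' : ∀ (n : N) (g : G), act' (τ' n) (β g) = τ' (act' n g))
    (σ : M →ₗ[K] N)
    (hσact : ∀ (m : M) (g : G), σ (act m g) = act' (σ m) g)
    (hσκ : ∀ m, κ' (σ m) = σ (κ m))
    (hστ : ∀ m, τ' (σ m) = σ (τ m))
    (f : Module.Dual K N) (hf : InModuleSweedlerDual mul α β act' f) :
    InModuleSweedlerDual mul α β act (f.comp σ) := by
  obtain ⟨J, hJ, hfin, hfJ⟩ := hf
  -- The same ideal `J` works, because `σ (M·J) ⊆ N·J`.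
  have hle : moduleIdealSpan act J ≤ (moduleIdealSpan act' J).comap σ := by
    refine Submodule.span_le.2 ?_
    rintro _ ⟨m, j, hj, rfl⟩
    exact Submodule.subset_span ⟨σ m, j, hj, hσact m j⟩
  exact ⟨J, hJ, hfin, fun x hx => hfJ (σ x) (hle hx)⟩
end

section
/- Let (G, μ, α, β) be a finite-dimensional BiHom-algebra over a field K and let (M, ρ, κ, τ) be a right BiHom-module over G. Let γ : M* → M* ⊗ G* be the composite of the transpose ρ* : M* → (M ⊗ G)* with the inverse of the canonical isomorphism M* ⊗ G* ≅ (M ⊗ G)* (which exists since G is finite-dimensional), and let Δ : G* → G* ⊗ G* be the dual comultiplication given by μ* followed by the inverse of the canonical isomorphism G* ⊗ G* ≅ (G ⊗ G)*. Then (M*, γ, τ*, κ*) is a right BiHom-comodule over the BiHom-coalgebra (G*, Δ, β*, α*): (γ ⊗ β*)∘γ = (κ* ⊗ Δ)∘γ, (τ* ⊗ β*)∘γ = γ∘τ*, and (κ* ⊗ α*)∘γ = γ∘κ*. -/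
/-!
Fixing `g : G` and evaluating the second factor at `g` gives a map `contract g : V ⊗ G* → V`.
As `G` is finite-dimensional, a tensor in `V ⊗ G*` is determined by its contractions
(`ext_contract`); no finiteness of `V` is needed. The defining property of `γ` says that
`contract g (γ ξ) = ξ ∘ (· g)`, and that of `Δ` says that contracting `Δ f` twice gives
`f (g h)`. Contracting both sides of each comodule identity and evaluating at `m : M` turns
it into `ξ` applied to the corresponding module identity.
-/

open TensorProduct

/-- The contraction `V ⊗ G* → V`, `v ⊗ f ↦ f g • v`. -/
noncomputable def contract {K G : Type*} (V : Type*) [Field K] [AddCommGroup G] [Module K G]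
    [AddCommGroup V] [Module K V] (g : G) : V ⊗[K] Module.Dual K G →ₗ[K] V :=
  (TensorProduct.rid K V).toLinearMap ∘ₗ (Module.Dual.eval K G g).lTensor V

section

variable {K G V W M : Type*} [Field K] [AddCommGroup G] [Module K G]
  [AddCommGroup V] [Module K V] [AddCommGroup W] [Module K W] [AddCommGroup M] [Module K M]

@[simp]
theorem contract_tmul (g : G) (v : V) (f : Module.Dual K G) :
    contract V g (v ⊗ₜ[K] f) = f g • v := by
  simp [contract]

theorem ext_contract [FiniteDimensional K G] {s t : V ⊗[K] Module.Dual K G}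
    (h : ∀ g : G, contract V g s = contract V g t) : s = t := by
  let b := Module.finBasis K G
  -- A tensor is recovered from its contractions with a basis by means of the dual basis.
  have key : ∀ u : V ⊗[K] Module.Dual K G, u = ∑ i, contract V (b i) u ⊗ₜ[K] b.coord i := by
    intro u
    induction u with
    | zero => simp
    | add x y hx hy =>
      simp only [map_add, add_tmul, Finset.sum_add_distrib]
      rw [← hx, ← hy]
    | tmul v f =>
      simp only [contract_tmul, smul_tmul, ← tmul_sum]
      rw [b.sum_dual_apply_smul_coord f]
  rw [key s, key t]
  simp only [h]

theorem contract_apply (g : G) (t : Module.Dual K M ⊗[K] Module.Dual K G) (m : M) :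
    contract _ g t m = TensorProduct.dualDistrib K M G t (m ⊗ₜ g) := by
  induction t with
  | zero => simp
  | add x y hx hy => simp [hx, hy]
  | tmul v f => simp [mul_comm]

theorem contract_map (u : V →ₗ[K] W) (a : G →ₗ[K] G) (g : G) (t : V ⊗[K] Module.Dual K G) :
    contract W g (TensorProduct.map u a.dualMap t) = u (contract V (a g) t) := by
  induction t with
  | zero => simp
  | add x y hx hy => simp [hx, hy]
  | tmul v f => simp

theorem contract_contract_assoc_symm (g h : G) (v : V)
    (s : Module.Dual K G ⊗[K] Module.Dual K G) :
    contract V g (contract _ h ((TensorProduct.assoc K V _ _).symm (v ⊗ₜ[K] s))) =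
      TensorProduct.dualDistrib K G G s (g ⊗ₜ h) • v := by
  induction s with
  | zero => simp
  | add x y hx hy => simp [tmul_add, add_smul, hx, hy]
  | tmul p q => simp [mul_smul, smul_comm (p g)]

/-- Contracting twice after applying the dual comultiplication `Δ` to the second factor is
contracting once with the product. -/
theorem contract_contract_comul (mul : G →ₗ[K] G →ₗ[K] G)
    (Δ : Module.Dual K G →ₗ[K] Module.Dual K G ⊗[K] Module.Dual K G)
    (hΔ : ∀ f : Module.Dual K G,
      TensorProduct.dualDistrib K G G (Δ f) = (TensorProduct.lift mul).dualMap f)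
    (u : V →ₗ[K] W) (g h : G) (t : V ⊗[K] Module.Dual K G) :
    contract W g (contract _ h ((TensorProduct.assoc K W _ _).symm (TensorProduct.map u Δ t))) =
      u (contract V (mul g h) t) := by
  induction t with
  | zero => simp
  | add x y hx hy => simp [hx, hy]
  | tmul v f => simp [contract_contract_assoc_symm, hΔ]

end

/-- The dual of a right BiHom-module over a finite-dimensional BiHom-algebra is
a right BiHom-comodule over the dual BiHom-coalgebra: with `γ` characterized by
`dualDistrib ∘ γ = ρ*` and `Δ` by `dualDistrib ∘ Δ = μ*`, the triple
`(M*, γ, τ*, κ*)` is a right BiHom-comodule over `(G*, Δ, β*, α*)`. -/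
theorem dual_biHomComodule_of_finiteDimensional {K G M : Type*} [Field K]
    [AddCommGroup G] [Module K G] [FiniteDimensional K G]
    [AddCommGroup M] [Module K M]
    (mul : G →ₗ[K] G →ₗ[K] G) (α β : G →ₗ[K] G)
    (hcomm : ∀ x, α (β x) = β (α x))
    (hassoc : ∀ x y z, mul (α x) (mul y z) = mul (mul x y) (β z))
    (hαmul : ∀ x y, α (mul x y) = mul (α x) (α y))
    (hβmul : ∀ x y, β (mul x y) = mul (β x) (β y))
    (act : M →ₗ[K] G →ₗ[K] M) (κ τ : M →ₗ[K] M)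
    (hκτ : ∀ m, κ (τ m) = τ (κ m))
    (hact : ∀ (m : M) (g h : G), act (act m g) (β h) = act (κ m) (mul g h))
    (hκact : ∀ (m : M) (g : G), act (κ m) (α g) = κ (act m g))
    (hτact : ∀ (m : M) (g : G), act (τ m) (β g) = τ (act m g))
    (Δ : Module.Dual K G →ₗ[K] Module.Dual K G ⊗[K] Module.Dual K G)
    (hΔ : ∀ f : Module.Dual K G,
      TensorProduct.dualDistrib K G G (Δ f) = (TensorProduct.lift mul).dualMap f)
    (γ : Module.Dual K M →ₗ[K] Module.Dual K M ⊗[K] Module.Dual K G)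
    (hγ : ∀ ξ : Module.Dual K M,
      TensorProduct.dualDistrib K M G (γ ξ) = (TensorProduct.lift act).dualMap ξ) :
    (∀ ξ : Module.Dual K M,
      TensorProduct.map γ β.dualMap (γ ξ) =
        (TensorProduct.assoc K (Module.Dual K M) (Module.Dual K G)
          (Module.Dual K G)).symm (TensorProduct.map κ.dualMap Δ (γ ξ))) ∧
    (∀ ξ : Module.Dual K M,
      TensorProduct.map τ.dualMap β.dualMap (γ ξ) = γ (τ.dualMap ξ)) ∧
    (∀ ξ : Module.Dual K M,
      TensorProduct.map κ.dualMap α.dualMap (γ ξ) = γ (κ.dualMap ξ)) := by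
  have hc : ∀ ξ g m, contract _ g (γ ξ) m = ξ (act m g) := by
    intro ξ g m
    simp [contract_apply, hγ]
  refine ⟨fun ξ => ?_, fun ξ => ?_, fun ξ => ?_⟩
  · refine ext_contract fun h => ext_contract fun g => LinearMap.ext fun m => ?_
    rw [contract_contract_comul mul Δ hΔ, contract_map]
    simp [hc, hact]
  · refine ext_contract fun g => LinearMap.ext fun m => ?_
    simp [contract_map, hc, hτact]
  · refine ext_contract fun g => LinearMap.ext fun m => ?_
    simp [contract_map, hc, hκact]
end
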